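/- Let G be a twice continuously differentiable convex function on p × q real matrices. Let H(U,V) = G(UVᵀ) for U ∈ ℝ^{p×m}, V ∈ ℝ^{q×m}, m > 1. If (U,V) satisfies ∇H(U,V) = 0 and the Hessian of H at (U,V) is positive semidefinite, and if U or V is rank deficient, then ∇G(UVᵀ) = 0, so N = UVᵀ is a global minimum of G. -/

import Mathlib

open Matrix
attribute [local instance] Matrix.normedAddCommGroup Matrix.normedSpace

lemma smoothMul {p q m : ℕ} : ContDiff ℝ 2 (fun UV : Matrix (Fin p) (Fin m) ℝ × Matrix (Fin q) (Fin m) ℝ => UV.1 * UV.2ᵀ) := by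
  refine contDiff_pi.2 fun i => contDiff_pi.2 fun j => ?_
  simp only [Matrix.mul_apply, Matrix.transpose_apply]
  refine ContDiff.sum fun k _ => ContDiff.mul ?_ ?_
  · exact contDiff_pi.1 (contDiff_pi.1 (contDiff_fst (𝕜 := ℝ) (E := Fin p → Fin m → ℝ) (F := Fin q → Fin m → ℝ)) i) k
  · exact contDiff_pi.1 (contDiff_pi.1 (contDiff_snd (𝕜 := ℝ) (E := Fin p → Fin m → ℝ) (F := Fin q → Fin m → ℝ)) j) k

set_option maxHeartbeats 2000000 in
/-- second-order expansion along a line -/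
lemma hess_formula {E F : Type*} [NormedAddCommGroup E] [NormedSpace ℝ E]
    [NormedAddCommGroup F] [NormedSpace ℝ F] (G : F → ℝ) (H : E → ℝ)
    (hG : ContDiff ℝ 2 G) (hH : ContDiff ℝ 2 H) (P w : E) (A B C : F)
    (h : ∀ t : ℝ, H (P + t • w) = G (A + t • B + t ^ 2 • C)) :
    fderiv ℝ (fderiv ℝ H) P w w = fderiv ℝ (fderiv ℝ G) A B B + 2 * fderiv ℝ G A C := by
  have hl : ∀ s : ℝ, HasDerivAt (fun t : ℝ => P + t • w) w s := fun s => by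
    simpa using ((hasDerivAt_id s).smul_const w).const_add P
  have hc : ∀ s : ℝ, HasDerivAt (fun t : ℝ => A + t • B + t ^ 2 • C) (B + (2 * s) • C) s := fun s => by
    have e := (((hasDerivAt_id s).smul_const B).const_add A).add ((hasDerivAt_pow 2 s).smul_const C)
    have e' : (1:ℝ) • B + (((2:ℕ):ℝ) * s ^ (2 - 1)) • C = B + (2 * s) • C := by simp
    rw [e'] at e
    exact e
  have hGd : Differentiable ℝ G := hG.differentiable (by norm_num)
  have hHd : Differentiable ℝ H := hH.differentiable (by norm_num)
  have hG2 : Differentiable ℝ (fderiv ℝ G) :=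
    (hG.fderiv_right (m := 1) (by norm_num)).differentiable (by norm_num)
  have hH2 : Differentiable ℝ (fderiv ℝ H) :=
    (hH.fderiv_right (m := 1) (by norm_num)).differentiable (by norm_num)
  have h1 : ∀ s : ℝ, fderiv ℝ H (P + s • w) w
      = fderiv ℝ G (A + s • B + s ^ 2 • C) (B + (2 * s) • C) := fun s => by
    have e1 := (hHd (P + s • w)).hasFDerivAt.comp_hasDerivAt s (hl s)
    have e2 := (hGd (A + s • B + s ^ 2 • C)).hasFDerivAt.comp_hasDerivAt s (hc s)
    have e : (H ∘ fun t : ℝ => P + t • w) = (G ∘ fun t : ℝ => A + t • B + t ^ 2 • C) := funext h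
    rw [e] at e1
    exact e1.unique e2
  have f1 := ((hH2 (P + (0:ℝ) • w)).hasFDerivAt.comp_hasDerivAt 0 (hl 0)).clm_apply (hasDerivAt_const (0:ℝ) w)
  have hb : HasDerivAt (fun t : ℝ => B + (2 * t) • C) ((2:ℝ) • C) 0 := by
    simpa using (((hasDerivAt_id (0:ℝ)).const_mul 2).smul_const C).const_add B
  have f2 := ((hG2 (A + (0:ℝ) • B + (0:ℝ) ^ 2 • C)).hasFDerivAt.comp_hasDerivAt 0 (hc 0)).clm_apply hb
  have e : (fun s : ℝ => (fderiv ℝ H ∘ fun t : ℝ => P + t • w) s w)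
      = fun s => (fderiv ℝ G ∘ fun t : ℝ => A + t • B + t ^ 2 • C) s (B + (2 * s) • C) := funext h1
  rw [e] at f1
  have := f1.unique f2
  simpa using this

lemma convex_min {F : Type*} [NormedAddCommGroup F] [NormedSpace ℝ F] (G : F → ℝ)
    (hc : ConvexOn ℝ Set.univ G) (hG : Differentiable ℝ G) (A : F) (h0 : fderiv ℝ G A = 0) (M : F) :
    G A ≤ G M := by
  have hd : HasDerivAt (fun t : ℝ => G (AffineMap.lineMap A M t)) 0 0 := by
    have e := (hG (AffineMap.lineMap A M (0:ℝ))).hasFDerivAt.comp_hasDerivAt (0:ℝ) (AffineMap.hasDerivAt_lineMap (a := A) (b := M))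
    rw [AffineMap.lineMap_apply_zero, h0] at e
    exact e
  have hcv : ConvexOn ℝ Set.univ (fun t : ℝ => G (AffineMap.lineMap A M t)) :=
    hc.comp_affineMap (AffineMap.lineMap A M)
  have := hcv.le_slope_of_hasDerivAt (Set.mem_univ 0) (Set.mem_univ 1) one_pos hd
  simpa [slope_def_field] using this

lemma exists_ker {p m : ℕ} (U : Matrix (Fin p) (Fin m) ℝ) (h : U.rank < m) :
    ∃ z : Fin m → ℝ, z ≠ 0 ∧ U *ᵥ z = 0 := by
  by_contra! hn
  have hi : Function.Injective U.mulVecLin := by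
    rw [injective_iff_map_eq_zero]
    intro z hz
    by_contra h0
    exact hn z h0 hz
  have := LinearMap.finrank_range_of_inj hi
  rw [Matrix.rank, this] at h
  simp at h

lemma lin_zero (a b : ℝ) (h : ∀ t : ℝ, 0 ≤ a + t * b) : b = 0 := by
  by_contra hb
  have := h (-(a + 1) / b)
  rw [div_mul_cancel₀ _ hb] at this
  linarith

theorem lowRank_local_optimum_global
    {p q m : ℕ} (hm : 1 < m)
    (G : Matrix (Fin p) (Fin q) ℝ → ℝ)
    (hG_conv : ConvexOn ℝ Set.univ G)
    (hG_smooth : ContDiff ℝ 2 G)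
    (H : Matrix (Fin p) (Fin m) ℝ × Matrix (Fin q) (Fin m) ℝ → ℝ)
    (hH : ∀ UV, H UV = G (UV.1 * UV.2ᵀ))
    (U : Matrix (Fin p) (Fin m) ℝ) (V : Matrix (Fin q) (Fin m) ℝ)
    (hcrit : fderiv ℝ H (U, V) = 0)
    (hhess : ∀ w : Matrix (Fin p) (Fin m) ℝ × Matrix (Fin q) (Fin m) ℝ,
      0 ≤ fderiv ℝ (fderiv ℝ H) (U, V) w w)
    (hrank : U.rank < m ∨ V.rank < m) :
    fderiv ℝ G (U * Vᵀ) = 0 ∧ ∀ M : Matrix (Fin p) (Fin q) ℝ, G (U * Vᵀ) ≤ G M := by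
  have hHs : ContDiff ℝ 2 H := by
    have : H = fun UV => G (UV.1 * UV.2ᵀ) := funext hH
    rw [this]
    exact hG_smooth.comp smoothMul
  have key : ∀ (X : Matrix (Fin p) (Fin m) ℝ) (Y : Matrix (Fin q) (Fin m) ℝ),
      0 ≤ fderiv ℝ (fderiv ℝ G) (U * Vᵀ) (U * Yᵀ + X * Vᵀ) (U * Yᵀ + X * Vᵀ)
        + 2 * fderiv ℝ G (U * Vᵀ) (X * Yᵀ) := by
    intro X Y
    refine (hhess (X, Y)).trans_eq
      (hess_formula G H hG_smooth hHs (U, V) (X, Y) (U * Vᵀ) (U * Yᵀ + X * Vᵀ) (X * Yᵀ) ?_)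
    · intro t
      rw [hH]
      congr 1
      simp only [Prod.smul_mk, Prod.mk_add_mk, Matrix.transpose_add, Matrix.transpose_smul,
        Matrix.add_mul, Matrix.mul_add, Matrix.smul_mul, Matrix.mul_smul, smul_add, smul_smul, pow_two]
      abel
  have hvv : ∀ (a : Fin p → ℝ) (b : Fin q → ℝ), fderiv ℝ G (U * Vᵀ) (vecMulVec a b) = 0 := by
    intro a b
    have fin : ∀ z : Fin m → ℝ, z ≠ 0 →
        fderiv ℝ G (U * Vᵀ) (vecMulVec a z * (vecMulVec b z)ᵀ) = 0 →
        fderiv ℝ G (U * Vᵀ) (vecMulVec a b) = 0 := by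
      intro z hz h
      have e : vecMulVec a z * (vecMulVec b z)ᵀ = (z ⬝ᵥ z) • vecMulVec a b := by
        ext i j
        simp only [Matrix.mul_apply, Matrix.transpose_apply, vecMulVec_apply, Matrix.smul_apply,
          dotProduct, smul_eq_mul, Finset.sum_mul]
        exact Finset.sum_congr rfl fun k _ => by ring
      rw [e, map_smul, smul_eq_mul] at h
      exact (mul_eq_zero.1 h).resolve_left (fun h' => hz (dotProduct_self_eq_zero.1 h'))
    rcases hrank with h | h
    · obtain ⟨z, hz, hUz⟩ := exists_ker U h
      have e : U * (vecMulVec b z)ᵀ = 0 := by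
        rw [transpose_vecMulVec, mul_vecMulVec, hUz]; simp
      refine fin z hz (lin_zero (fderiv ℝ (fderiv ℝ G) (U * Vᵀ) (vecMulVec a z * Vᵀ) (vecMulVec a z * Vᵀ) / 2) _ fun t => ?_)
      have := key (vecMulVec a z) (t • vecMulVec b z)
      rw [Matrix.transpose_smul, Matrix.mul_smul, Matrix.mul_smul, e, smul_zero, zero_add, map_smul, smul_eq_mul] at this
      linarith
    · obtain ⟨z, hz, hVz⟩ := exists_ker V h
      have e : vecMulVec a z * Vᵀ = 0 := by
        rw [vecMulVec_mul, vecMul_transpose, hVz]; ext; simp [vecMulVec_apply]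
      refine fin z hz (lin_zero (fderiv ℝ (fderiv ℝ G) (U * Vᵀ) (U * (vecMulVec b z)ᵀ) (U * (vecMulVec b z)ᵀ) / 2) _ fun t => ?_)
      have := key (t • vecMulVec a z) (vecMulVec b z)
      rw [Matrix.smul_mul, Matrix.smul_mul, e, smul_zero, add_zero, map_smul, smul_eq_mul] at this
      linarith
  have h0 : fderiv ℝ G (U * Vᵀ) = 0 := by
    ext M
    change fderiv ℝ G (U * Vᵀ) M = 0
    rw [matrix_eq_sum_single M]
    simp only [map_sum]
    refine Finset.sum_eq_zero fun i _ => Finset.sum_eq_zero fun j _ => ?_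
    have : Matrix.single i j (M i j) = vecMulVec (Pi.single i (M i j)) (Pi.single j 1) := by
      ext k l
      simp only [Matrix.single_apply, vecMulVec_apply, Pi.single_apply]
      grind
    rw [this, hvv]
  exact ⟨h0, convex_min G hG_conv (hG_smooth.differentiable (by norm_num)) _ h0⟩
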